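/- arXiv:2012.08999 — 2 statements merged into one kernel-verified Lean document; each statement's English description precedes it below -/
import Mathlib

section
/- An abelian group endowed with a norm such that the induced metric topology is discrete is a free abelian group. -/
structure DN {A : Type*} [AddCommGroup A] (p : A → ℝ) : Prop where
  nonneg : ∀ a, 0 ≤ p a
  smul : ∀ (n : ℤ) (a : A), p (n • a) = |(n : ℝ)| * p a
  tri : ∀ a b, p (a + b) ≤ p a + p b
  disc : ∃ ε > (0 : ℝ), ∀ a, p a < ε → a = 0

def Good {A : Type*} [AddCommGroup A] (p : A → ℝ) (B : Submodule ℤ A) : Prop :=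
  ∃ ε > (0 : ℝ), ∀ n : ℤ, 0 < n → ∀ a y : A, n • a - y ∈ B → p y < n * ε → a ∈ B

namespace DN
variable {A : Type*} [AddCommGroup A] {p : A → ℝ}

lemma zero (h : DN p) : p 0 = 0 := by
  have := h.smul 0 0
  simpa using this

lemma neg (h : DN p) (a : A) : p (-a) = p a := by
  have := h.smul (-1) a
  simpa using this

lemma sub (h : DN p) (a b : A) : p (a - b) ≤ p a + p b := by
  have := h.tri a (-b)
  rwa [h.neg, ← sub_eq_add_neg] at this

lemma smul_pos (h : DN p) {n : ℤ} (hn : 0 < n) (a : A) : p (n • a) = n * p a := by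
  rw [h.smul, abs_of_pos (by exact_mod_cast hn)]

lemma tf (h : DN p) {n : ℤ} (hn : n ≠ 0) {a : A} (ha : n • a = 0) : a = 0 := by
  obtain ⟨ε, hε, H⟩ := h.disc
  apply H
  have h1 := h.smul n a
  rw [ha, h.zero] at h1
  have : |(n : ℝ)| ≠ 0 := by simpa using hn
  have : p a = 0 := by
    rcases mul_eq_zero.1 h1.symm with h | h
    · exact absurd h this
    · exact h
  linarith

lemma restrict (h : DN p) (D : Submodule ℤ A) : DN (fun x : D => p x) where
  nonneg a := h.nonneg a
  smul n a := h.smul n a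
  tri a b := h.tri a b
  disc := by
    obtain ⟨ε, hε, H⟩ := h.disc
    exact ⟨ε, hε, fun a ha => Subtype.ext (H a ha)⟩

lemma good_bot (h : DN p) : Good p (⊥ : Submodule ℤ A) := by
  obtain ⟨ε, hε, H⟩ := h.disc
  refine ⟨ε, hε, fun n hn a y hy hp => ?_⟩
  have hn' : (0 : ℝ) < n := by exact_mod_cast hn
  have : n • a = y := sub_eq_zero.1 (by simpa using hy)
  rw [← this, h.smul_pos hn] at hp
  simpa using H a (lt_of_mul_lt_mul_left hp hn'.le)

/-- The set of values `p y / n`, whose infimum is the quotient norm. -/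
def vals (p : A → ℝ) (B : Submodule ℤ A) (x : A ⧸ B) : Set ℝ :=
  {r | ∃ (n : ℤ) (y : A), 0 < n ∧ B.mkQ y = n • x ∧ r = p y / n}

lemma vals_bdd (h : DN p) (B : Submodule ℤ A) (x : A ⧸ B) : BddBelow (vals p B x) := by
  refine ⟨0, ?_⟩
  rintro r ⟨n, y, hn, -, rfl⟩
  have hn' : (0 : ℝ) < n := by exact_mod_cast hn
  have := h.nonneg y
  positivity

lemma vals_ne (p : A → ℝ) (B : Submodule ℤ A) (x : A ⧸ B) : (vals p B x).Nonempty := by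
  obtain ⟨y, hy⟩ := B.mkQ_surjective x
  exact ⟨_, 1, y, one_pos, by simp [hy], rfl⟩

lemma quot (h : DN p) {B : Submodule ℤ A} (hB : Good p B) :
    ∃ q : A ⧸ B → ℝ, DN q ∧ ∀ a, q (B.mkQ a) ≤ p a := by
  have bd := h.vals_bdd B
  have ne := vals_ne p B
  have le (x : A ⧸ B) (n : ℤ) (y : A) (hn : 0 < n) (hy : B.mkQ y = n • x) :
      sInf (vals p B x) ≤ p y / n := csInf_le (bd x) ⟨n, y, hn, hy, rfl⟩
  have nn (x : A ⧸ B) : 0 ≤ sInf (vals p B x) := by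
    refine le_csInf (ne x) ?_
    rintro r ⟨n, y, hn, -, rfl⟩
    have hn' : (0 : ℝ) < n := by exact_mod_cast hn
    have := h.nonneg y
    positivity
  have hz : sInf (vals p B 0) = 0 := by
    refine le_antisymm ?_ (nn 0)
    have := le 0 1 0 one_pos (by simp)
    simpa [h.zero] using this
  have hneg (x : A ⧸ B) : sInf (vals p B (-x)) ≤ sInf (vals p B x) := by
    refine le_csInf (ne x) ?_
    rintro r ⟨n, y, hn, hy, rfl⟩
    rw [← h.neg y]
    exact le _ n (-y) hn (by rw [map_neg, hy, smul_neg])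
  have hneg' (x : A ⧸ B) : sInf (vals p B (-x)) = sInf (vals p B x) := by
    refine le_antisymm (hneg x) ?_
    simpa using hneg (-x)
  have hpos (k : ℤ) (hk : 0 < k) (x : A ⧸ B) :
      sInf (vals p B (k • x)) = k * sInf (vals p B x) := by
    have hk' : (0 : ℝ) < k := by exact_mod_cast hk
    apply le_antisymm
    · rw [← div_le_iff₀' hk']
      refine le_csInf (ne x) ?_
      rintro r ⟨n, y, hn, hy, rfl⟩
      rw [div_le_iff₀' hk']
      have := le (k • x) n (k • y) hn (by rw [map_zsmul, hy, smul_comm])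
      rwa [h.smul_pos hk, mul_div_assoc] at this
    · refine le_csInf (ne _) ?_
      rintro r ⟨n, y, hn, hy, rfl⟩
      have hn' : (0 : ℝ) < n := by exact_mod_cast hn
      have := le x (n * k) y (by positivity) (by rw [hy, smul_smul])
      push_cast at this
      calc _ ≤ (k : ℝ) * (p y / (n * k)) := by gcongr
        _ = _ := by field_simp
  refine ⟨fun x => sInf (vals p B x), ⟨nn, ?_, ?_, ?_⟩, ?_⟩
  · intro n a
    rcases lt_trichotomy n 0 with hn | rfl | hn
    · have := hpos (-n) (by omega) a
      rw [neg_smul, hneg'] at this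
      rw [this, abs_of_neg (by exact_mod_cast hn)]
      simp
    · simp [hz]
    · rw [hpos n hn, abs_of_pos (by exact_mod_cast hn)]
  · intro a b
    apply le_of_forall_pos_le_add
    intro ε hε
    obtain ⟨_, ⟨n, y, hn, hy, rfl⟩, h1⟩ :=
      exists_lt_of_csInf_lt (ne a) (show sInf (vals p B a) < sInf (vals p B a) + ε / 2 by linarith)
    obtain ⟨_, ⟨m, z, hm, hz, rfl⟩, h2⟩ :=
      exists_lt_of_csInf_lt (ne b) (show sInf (vals p B b) < sInf (vals p B b) + ε / 2 by linarith)
    have hn' : (0 : ℝ) < n := by exact_mod_cast hn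
    have hm' : (0 : ℝ) < m := by exact_mod_cast hm
    have := le (a + b) (n * m) (m • y + n • z) (by positivity) (by
      rw [map_add, map_zsmul, map_zsmul, hy, hz, smul_add, smul_smul, smul_smul, mul_comm m n])
    have h3 := h.tri (m • y) (n • z)
    rw [h.smul_pos hn, h.smul_pos hm] at h3
    have h4 : p (m • y + n • z) / ((n * m : ℤ) : ℝ) ≤ p y / n + p z / m := by
      push_cast
      rw [div_add_div _ _ hn'.ne' hm'.ne']
      gcongr
      linarith
    linarith
  · obtain ⟨ε, hε, H⟩ := hB
    refine ⟨ε, hε, fun x hx => ?_⟩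
    obtain ⟨_, ⟨n, y, hn, hy, rfl⟩, h1⟩ := exists_lt_of_csInf_lt (ne x) hx
    have hn' : (0 : ℝ) < n := by exact_mod_cast hn
    obtain ⟨a, rfl⟩ := B.mkQ_surjective x
    rw [div_lt_iff₀' hn'] at h1
    have := H n hn a y (by
      rw [← B.ker_mkQ, LinearMap.mem_ker, map_sub, map_zsmul, hy, sub_self]) h1
    rwa [← B.ker_mkQ, LinearMap.mem_ker] at this
  · intro a
    have := le (B.mkQ a) 1 a one_pos (by simp)
    simpa using this

/-- Pure closure of one element. -/
def pc (a : A) : Submodule ℤ A where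
  carrier := {x | ∃ n m : ℤ, 0 < n ∧ n • x = m • a}
  zero_mem' := ⟨1, 0, one_pos, by simp⟩
  add_mem' := by
    rintro x y ⟨n, m, hn, h⟩ ⟨n', m', hn', h'⟩
    refine ⟨n * n', n' * m + n * m', by positivity, ?_⟩
    rw [smul_add, mul_comm n n', mul_smul, h, mul_comm n' n, mul_smul n n' y, h', add_smul,
      mul_smul, mul_smul]
  smul_mem' := by
    rintro c x ⟨n, m, hn, h⟩
    exact ⟨n, c * m, hn, by rw [smul_comm, h, mul_smul]⟩

lemma pc_good (h : DN p) (a : A) : Good p (pc a) := by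
  obtain ⟨ε, hε, H⟩ := h.disc
  obtain ⟨N, hN⟩ := exists_nat_gt (2 * p a / ε)
  have hN0 : (0 : ℝ) < N := lt_of_le_of_lt (by have := h.nonneg a; positivity) hN
  have hNpos : 0 < N := by exact_mod_cast hN0
  refine ⟨ε / (2 * N), by positivity, ?_⟩
  rintro n hn x y ⟨l, m, hl, hlm⟩ hy
  obtain ⟨j, k, hk, hkN, hjk⟩ :=
    Real.exists_int_int_abs_mul_sub_le ((m : ℝ) / (n * l)) hNpos
  have hn' : (0 : ℝ) < n := by exact_mod_cast hn
  have hl' : (0 : ℝ) < l := by exact_mod_cast hl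
  have hk' : (0 : ℝ) < k := by exact_mod_cast hk
  have hkN' : (k : ℝ) ≤ N := by exact_mod_cast hkN
  have e : (n * l) • (k • x - j • a) = (k * l) • y + (k * m - n * l * j) • a := by
    have : (k * l) • (n • x - y) = (k * m) • a := by rw [mul_smul, hlm, mul_smul]
    rw [sub_smul, ← this]
    module
  have h1 : p (k • x - j • a) < ε := by
    have h2 := h.tri ((k * l) • y) ((k * m - n * l * j) • a)
    rw [← e, h.smul_pos (by positivity), h.smul_pos (by positivity), h.smul] at h2
    push_cast at h2
    have h3 : |(k : ℝ) * m - n * l * j| ≤ n * l * (1 / (N + 1)) := by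
      have : (k : ℝ) * m - n * l * j = n * l * (k * (m / (n * l)) - j) := by field_simp
      rw [this, abs_mul, abs_of_pos (by positivity)]
      gcongr
    have h4 : (k : ℝ) * l * p y < n * l * (ε / 2) := by
      calc (k : ℝ) * l * p y ≤ N * l * p y := by have := h.nonneg y; gcongr
        _ < N * l * (n * (ε / (2 * N))) := by gcongr
        _ = _ := by field_simp
    have h5 : |(k : ℝ) * m - n * l * j| * p a ≤ n * l * (ε / 2) := by
      calc _ ≤ n * l * (1 / ((N : ℝ) + 1)) * p a := by have := h.nonneg a; gcongr
        _ = n * l * (p a / (N + 1)) := by ring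
        _ ≤ _ := by
          refine mul_le_mul_of_nonneg_left ?_ (by positivity)
          rw [div_lt_iff₀ hε] at hN
          rw [div_le_iff₀ (by positivity)]
          nlinarith
    have : (n : ℝ) * l * p (k • x - j • a) < n * l * ε := by linarith
    exact lt_of_mul_lt_mul_left this (by positivity)
  exact ⟨k, j, hk, sub_eq_zero.1 (H _ h1)⟩

lemma pc_free (h : DN p) (a : A) : Module.Free ℤ (pc a) := by
  obtain ⟨ε, hε, H⟩ := h.disc
  have tf : Module.IsTorsionFree ℤ (pc a) := by
    refine Module.IsTorsionFree.of_smul_eq_zero fun n x hx => ?_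
    by_cases hn : n = 0
    · exact Or.inl hn
    · exact Or.inr (Subtype.ext (h.tf hn (congrArg Subtype.val hx)))
  suffices ∃ b ∈ pc a, ∀ x ∈ pc a, ∃ q : ℤ, x = q • b by
    obtain ⟨b, hbm, hb⟩ := this
    have e : pc a = Submodule.span ℤ {b} := by
      apply le_antisymm
      · intro x hx
        obtain ⟨q, rfl⟩ := hb x hx
        exact Submodule.smul_mem _ _ (Submodule.mem_span_singleton_self b)
      · simpa using hbm
    have : Module.Finite ℤ (pc a) := by
      rw [e]
      infer_instance
    exact Module.free_of_finite_type_torsion_free'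
  by_cases ha : a = 0
  · refine ⟨0, zero_mem _, ?_⟩
    rintro x ⟨n, m, hn, hx⟩
    refine ⟨0, ?_⟩
    rw [zero_smul]
    exact h.tf hn.ne' (by rw [hx, ha, smul_zero])
  set S : Set ℝ := {r | ∃ b ∈ pc a, b ≠ 0 ∧ r = p b} with hS
  have ham : a ∈ pc a := ⟨1, 1, one_pos, rfl⟩
  have hne : S.Nonempty := ⟨p a, a, ham, ha, rfl⟩
  have hlb : ∀ r ∈ S, ε ≤ r := by
    rintro r ⟨b, -, hb, rfl⟩
    by_contra hh
    exact hb (H b (not_le.1 hh))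
  have hbd : BddBelow S := ⟨ε, hlb⟩
  have hI : 0 < sInf S := lt_of_lt_of_le hε (le_csInf hne hlb)
  obtain ⟨_, ⟨b, ⟨n', m', hn', hb'⟩, hb0, rfl⟩, hb⟩ :=
    exists_lt_of_csInf_lt hne (show sInf S < 2 * sInf S by linarith)
  have hbm : b ∈ pc a := ⟨n', m', hn', hb'⟩
  refine ⟨b, hbm, ?_⟩
  intro x hx
  obtain ⟨n, m, hn, hxm⟩ := id hx
  have hm' : m' ≠ 0 := by
    rintro rfl
    rw [zero_smul] at hb'
    exact hb0 (h.tf hn'.ne' hb')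
  -- rational coefficient
  set ξ : ℝ := (m * n' : ℝ) / (n * m') with hξ
  refine ⟨round ξ, ?_⟩
  by_contra hne'
  have h1 : sInf S ≤ p (x - round ξ • b) :=
    csInf_le hbd ⟨_, sub_mem hx ((pc a).smul_mem _ hbm), sub_ne_zero.2 hne', rfl⟩
  have e : (n * m') • (x - round ξ • b) = (m * n' - n * m' * round ξ) • b := by
    have : (n * m') • x = (m * n') • b := by
      rw [mul_comm, mul_smul, hxm, mul_smul, hb', smul_comm]
    rw [smul_sub, this, sub_smul, mul_smul (n * m')]
  have h2 := h.smul (n * m') (x - round ξ • b)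
  rw [e, h.smul] at h2
  have hnm : (n * m' : ℝ) ≠ 0 := by exact_mod_cast mul_ne_zero hn.ne' hm'
  have h3 : ((m * n' - n * m' * round ξ : ℤ) : ℝ) = (n * m' : ℝ) * (ξ - round ξ) := by
    push_cast
    rw [hξ]
    field_simp
  rw [h3, abs_mul] at h2
  push_cast at h2
  rw [mul_assoc] at h2
  have h4 := mul_left_cancel₀ (abs_ne_zero.2 hnm) h2
  have h5 := abs_sub_round ξ
  have := h.nonneg b
  nlinarith

lemma step (h : DN p) {B : Submodule ℤ A} (hB : Good p B) (a : A) :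
    ∃ B' : Submodule ℤ A, Good p B' ∧ B ≤ B' ∧ a ∈ B' ∧ Module.Free ℤ (B'.map B.mkQ) := by
  obtain ⟨q, hq, hle⟩ := h.quot hB
  refine ⟨(pc (B.mkQ a)).comap B.mkQ, ?_, ?_, ?_, ?_⟩
  · obtain ⟨ε, hε, H⟩ := hq.pc_good (B.mkQ a)
    refine ⟨ε, hε, fun n hn x y hy hp => H n hn _ (B.mkQ y) ?_ ((hle y).trans_lt hp)⟩
    simpa using hy
  · exact B.le_comap_mkQ _
  · exact ⟨1, 1, one_pos, rfl⟩
  · rw [Submodule.map_comap_eq_of_surjective B.mkQ_surjective]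
    exact hq.pc_free _

end DN

lemma exists_compl {A : Type*} [AddCommGroup A] {B B' : Submodule ℤ A} (hle : B ≤ B')
    (hf : Module.Free ℤ (B'.map B.mkQ)) :
    ∃ C : Submodule ℤ A, Module.Free ℤ C ∧ Disjoint B C ∧ B ⊔ C = B' := by
  obtain ⟨s, hs⟩ := Module.projective_lifting_property B.mkQ (B'.map B.mkQ).subtype
    B.mkQ_surjective
  have hs' : ∀ d, B.mkQ (s d) = d := fun d => LinearMap.congr_fun hs d
  have mm : ∀ y, B.mkQ y = 0 ↔ y ∈ B := fun y => by simp
  have inj : Function.Injective s := fun d d' hd => Subtype.ext (by rw [← hs', ← hs', hd])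
  refine ⟨LinearMap.range s, Module.Free.of_equiv (LinearEquiv.ofInjective s inj), ?_, ?_⟩
  · rw [Submodule.disjoint_def]
    rintro _ hx ⟨d, rfl⟩
    rw [← mm, hs'] at hx
    rw [show d = 0 from Subtype.ext hx, map_zero]
  · apply le_antisymm
    · refine sup_le hle ?_
      rintro _ ⟨d, rfl⟩
      obtain ⟨y, hy, hyd⟩ := d.2
      rw [← hs', ← sub_eq_zero, ← map_sub, ← LinearMap.mem_ker, B.ker_mkQ] at hyd
      have := sub_mem hy (hle hyd)
      simpa using this
    · intro x hx
      have : x - s ⟨B.mkQ x, Submodule.mem_map_of_mem hx⟩ ∈ B := by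
        rw [← mm, map_sub, hs', sub_self]
      rw [← sub_add_cancel x (s ⟨B.mkQ x, Submodule.mem_map_of_mem hx⟩)]
      exact Submodule.add_mem_sup this ⟨_, rfl⟩

lemma free_chain {A ι : Type*} [AddCommGroup A] [LinearOrder ι] [WellFoundedLT ι]
    (F : ι → Submodule ℤ A) (hm : Monotone F) (htop : ∀ a, ∃ i, a ∈ F i)
    (hf : ∀ i, Module.Free ℤ ((F i).map (⨆ j < i, F j).mkQ)) : Module.Free ℤ A := by
  classical
  have key : ∀ i, (⨆ j < i, F j) ≤ F i := fun i => iSup₂_le fun j hj => hm hj.le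
  choose C hC hd hs using fun i => exists_compl (key i) (hf i)
  have hCF : ∀ i, C i ≤ F i := fun i => (hs i) ▸ le_sup_right
  have ind : iSupIndep C := by
    rw [iSupIndep_iff_supIndep]
    intro s
    induction s using Finset.induction_on_max with
    | empty => exact Finset.supIndep_empty _
    | insert i s hi ih =>
      refine ih.insert ((hd i).symm.mono_right ?_)
      exact Finset.sup_le fun j hj => (hCF j).trans (le_iSup₂_of_le j (hi j hj) le_rfl)
  have top : iSup C = ⊤ := by
    have : ∀ i, F i ≤ iSup C := by
      intro i
      induction i using WellFoundedLT.induction with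
      | ind i ih =>
        rw [← hs i]
        exact sup_le (iSup₂_le ih) (le_iSup C i)
    rw [eq_top_iff]
    intro a _
    obtain ⟨i, hi⟩ := htop a
    exact this i hi
  have int := DirectSum.isInternal_submodule_of_iSupIndep_of_iSup_eq_top ind top
  exact Module.Free.of_equiv (LinearEquiv.ofBijective (DirectSum.coeLinearMap C) int)

lemma free_countable {A : Type*} [AddCommGroup A] {p : A → ℝ} (h : DN p) [Countable A] :
    Module.Free ℤ A := by
  obtain ⟨f, hf⟩ := exists_surjective_nat A
  choose! T hT1 hT2 hT3 hT4 using fun (B : Submodule ℤ A) (hB : Good p B) => h.step hB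
  let F : ℕ → Submodule ℤ A := fun n => Nat.rec ⊥ (fun k B => T B (f k)) n
  have hF : ∀ n, Good p (F n) := by
    intro n
    induction n with
    | zero => exact h.good_bot
    | succ n ih => exact hT1 _ ih _
  have hm : Monotone F := monotone_nat_of_le_succ fun n => hT2 _ (hF n) _
  refine free_chain (fun n => F (n + 1)) (fun a b hab => hm (Nat.succ_le_succ hab)) (fun a => ?_) (fun i => ?_)
  · obtain ⟨n, rfl⟩ := hf a
    exact ⟨n, hT3 _ (hF n) _⟩
  · have : (⨆ j < i, F (j + 1)) = F i := by
      apply le_antisymm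
      · exact iSup₂_le fun j hj => hm hj
      · cases i with
        | zero => exact bot_le
        | succ i => exact le_iSup₂_of_le i (Nat.lt_succ_self i) le_rfl
    rw [this]
    exact hT4 _ (hF i) _

open Cardinal in
lemma hull_exists {A : Type*} [AddCommGroup A] (f : ℕ → A → A) (X : Set A) :
    ∃ B : Submodule ℤ A, X ⊆ B ∧ (∀ n, ∀ b ∈ B, f n b ∈ B) ∧ #B ≤ max #X ℵ₀ := by
  let N : Set A → Set A := fun S => (S ∪ {0}) ∪ (Set.image2 (· - ·) S S ∪ ⋃ n, f n '' S)
  let S : ℕ → Set A := fun n => N^[n] X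
  have hS : ∀ n, S (n + 1) = N (S n) := fun n => Function.iterate_succ_apply' N n X
  have hmono : Monotone S := monotone_nat_of_le_succ fun n => by
    rw [hS]
    exact fun x hx => Or.inl (Or.inl hx)
  have h0 : (0 : A) ∈ S 1 := by
    rw [hS]
    exact Or.inl (Or.inr rfl)
  have hsub : ∀ x y, (∃ n, x ∈ S n) → (∃ n, y ∈ S n) → ∃ n, x - y ∈ S n := by
    rintro x y ⟨n, hn⟩ ⟨m, hm⟩
    refine ⟨max n m + 1, ?_⟩
    rw [hS]
    exact Or.inr (Or.inl ⟨x, hmono (le_max_left _ _) hn, y, hmono (le_max_right _ _) hm, rfl⟩)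
  let G : AddSubgroup A := AddSubgroup.ofSub {x | ∃ n, x ∈ S n} ⟨0, 1, h0⟩
    (fun {x} hx {y} hy => by simpa [sub_eq_add_neg] using hsub x y hx hy)
  have hG : ∀ x, x ∈ AddSubgroup.toIntSubmodule G ↔ ∃ n, x ∈ S n := fun x => Iff.rfl
  refine ⟨AddSubgroup.toIntSubmodule G, ?_, ?_, ?_⟩
  · exact fun x hx => (hG x).2 ⟨0, hx⟩
  · rintro n b ⟨m, hm⟩
    refine ⟨m + 1, ?_⟩
    rw [hS]
    exact Or.inr (Or.inr (Set.mem_iUnion.2 ⟨n, b, hm, rfl⟩))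
  · set κ := max #X ℵ₀ with hκ
    have hω : ℵ₀ ≤ κ := le_max_right _ _
    have hU (T : ℕ → Set A) (hT : ∀ n, #(T n) ≤ κ) : #(⋃ n, T n) ≤ κ := by
      have := mk_iUnion_le_lift T
      rw [mk_nat, lift_aleph0] at this
      simp only [lift_uzero] at this
      exact this.trans (mul_le_of_le hω hω (ciSup_le' hT))
    have hun (T T' : Set A) (hT : #T ≤ κ) (hT' : #T' ≤ κ) : #(T ∪ T' : Set A) ≤ κ :=
      (mk_union_le T T').trans (add_le_of_le hω hT hT')
    have hc : ∀ n, #(S n) ≤ κ := by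
      intro n
      induction n with
      | zero => exact le_max_left _ _
      | succ n ih =>
        rw [hS]
        refine hun _ _ (hun _ _ ih ?_) (hun _ _ ?_ (hU _ fun m => mk_image_le.trans ih))
        · rw [mk_singleton]
          exact one_le_aleph0.trans hω
        · rw [← Set.image_uncurry_prod]
          refine mk_image_le.trans ?_
          rw [mk_setProd]
          exact mul_le_of_le hω ih ih
    have e : ((AddSubgroup.toIntSubmodule G : Submodule ℤ A) : Set A) = ⋃ n, S n := by
      ext x
      rw [Set.mem_iUnion]
      exact hG x
    have := hU S hc
    rw [← e] at this
    exact this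

open Cardinal in
theorem free_main (κ : Cardinal) : ∀ (A : Type _) [AddCommGroup A] (p : A → ℝ),
    DN p → #A = κ → Module.Free ℤ A := by
  induction κ using WellFoundedLT.induction with
  | ind κ IH =>
  intro A _ p h hA
  by_cases hc : #A ≤ ℵ₀
  · have : Countable A := mk_le_aleph0_iff.1 hc
    exact free_countable h
  have hc' : ℵ₀ < #A := not_le.1 hc
  classical
  obtain ⟨ε, hε, H⟩ := h.disc
  let f : ℕ → A → A := fun n b =>
    if hx : ∃ x : A, p ((n : ℤ) • x - b) < n * (ε / 2) then hx.choose else 0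
  let Cl : Submodule ℤ A → Prop := fun B => ∀ n, ∀ b ∈ B, f n b ∈ B
  have good : ∀ B, Cl B → Good p B := by
    intro B hB
    refine ⟨ε / 2, by positivity, fun n hn a y hy hp => ?_⟩
    lift n to ℕ using hn.le
    have hn' : (0 : ℝ) < n := by exact_mod_cast hn
    have hx : ∃ x : A, p ((n : ℤ) • x - ((n : ℤ) • a - y)) < n * (ε / 2) :=
      ⟨a, by simpa using hp⟩
    have h1 := hB n _ hy
    simp only [f, dif_pos hx] at h1
    have h2 := hx.choose_spec
    set x := hx.choose
    have h3 := h.sub y ((n : ℤ) • x - ((n : ℤ) • a - y))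
    rw [show y - ((n : ℤ) • x - ((n : ℤ) • a - y)) = (n : ℤ) • (a - x) by
      rw [smul_sub]; abel, h.smul_pos hn] at h3
    push_cast at h3 hp
    have h4 : (n : ℝ) * p (a - x) < n * ε := by linarith
    have h5 := H _ (lt_of_mul_lt_mul_left h4 hn'.le)
    rw [sub_eq_zero.1 h5]
    exact h1
  let ι := (#A).ord.ToType
  have hι : #ι = #A := mk_ord_toType _
  obtain ⟨e⟩ := Cardinal.eq.1 hι
  let Hull : Set A → Submodule ℤ A := fun X => sInf {B | X ⊆ B ∧ Cl B}
  have hcl : ∀ X, Cl (Hull X) := by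
    intro X n b hb
    rw [Submodule.mem_sInf] at hb ⊢
    exact fun B hB => hB.2 n b (hb B hB)
  have hsub : ∀ X : Set A, X ⊆ (Hull X : Set A) := by
    intro X x hx
    exact Submodule.mem_sInf.2 fun B hB => hB.1 hx
  have hmono : ∀ X Y, X ⊆ Y → Hull X ≤ Hull Y := by
    intro X Y hXY
    exact sInf_le_sInf fun B hB => ⟨hXY.trans hB.1, hB.2⟩
  have hcard : ∀ X, #(Hull X) ≤ max #X ℵ₀ := by
    intro X
    obtain ⟨B, h1, h2, h3⟩ := hull_exists f X
    have : Hull X ≤ B := sInf_le ⟨h1, h2⟩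
    exact (mk_le_mk_of_subset (s := (Hull X : Set A)) (t := B) this).trans h3
  let F : ι → Submodule ℤ A := fun i => Hull (e '' Set.Iic i)
  have hFm : Monotone F := fun i j hij =>
    hmono _ _ (Set.image_mono (Set.Iic_subset_Iic.2 hij))
  refine free_chain F hFm (fun a => ⟨e.symm a, hsub _ ⟨e.symm a, Set.self_mem_Iic, by simp⟩⟩) fun i => ?_
  have hg : Good p (⨆ j < i, F j) := by
    rcases (Set.Iio i).eq_empty_or_nonempty with he | hne
    · have : (⨆ j < i, F j) = ⊥ := by
        rw [eq_bot_iff]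
        refine iSup₂_le fun j hj => ?_
        have : j ∈ Set.Iio i := hj
        rw [he] at this
        exact this.elim
      rw [this]
      exact h.good_bot
    · apply good
      have : Nonempty (Set.Iio i) := hne.to_subtype
      have hmem : ∀ x, x ∈ (⨆ j < i, F j) ↔ ∃ j : Set.Iio i, x ∈ F j := by
        intro x
        rw [← Submodule.mem_iSup_of_directed]
        · rw [iSup_subtype]
          rfl
        · exact Monotone.directed_le fun j k hjk => hFm hjk
      intro n b hb
      rw [hmem] at hb ⊢
      obtain ⟨j, hj⟩ := hb
      exact ⟨j, hcl _ n b hj⟩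
  obtain ⟨q, hq, -⟩ := h.quot hg
  refine IH #((F i).map (⨆ j < i, F j).mkQ) ?_ _ _ (hq.restrict _) rfl
  rw [← hA]
  refine lt_of_le_of_lt (mk_image_le (s := (F i : Set A)) (f := (⨆ j < i, F j).mkQ)) ?_
  refine (hcard _).trans_lt (max_lt ?_ hc')
  refine mk_image_le.trans_lt ?_
  refine lt_of_lt_of_eq ?_ hι
  exact mk_Iic_lt i (by rw [hι]; simp [ι]) (by rw [hι]; exact hc'.le)

/-- Steprāns. An abelian group endowed with a norm
(`‖a‖ = 0 ↔ a = 0`, `‖n • a‖ = |n| ‖a‖` for integers `n`, triangle inequality)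
such that the induced metric topology is discrete (every point is isolated)
is a free abelian group. -/
theorem free_of_discrete_normed_abelian_group
    (A : Type*) [AddCommGroup A] (norm : A → ℝ)
    (hnonneg : ∀ a : A, 0 ≤ norm a)
    (h0 : ∀ a : A, norm a = 0 ↔ a = 0)
    (hsmul : ∀ (n : ℤ) (a : A), norm (n • a) = |(n : ℝ)| * norm a)
    (htri : ∀ a b : A, norm (a + b) ≤ norm a + norm b)
    -- the metric `d a b = norm (a - b)` induces the discrete topology:
    (hdiscrete : ∀ a : A, ∃ ε > (0 : ℝ), ∀ b : A, b ≠ a → ε ≤ norm (b - a)) :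
    Module.Free ℤ A := by
  obtain ⟨ε, hε, H⟩ := hdiscrete 0
  refine free_main _ A norm ⟨hnonneg, hsmul, htri, ε, hε, fun a ha => ?_⟩ rfl
  by_contra hne
  have := H a hne
  rw [sub_zero] at this
  linarith
end

section
/- Let H be a finite subgroup of a group Γ acting freely on a Cantor set X by homeomorphisms. Then the ℤ[Γ]-module C(X;ℤ) ⊗_ℤ ℤ[Γ/H], with the diagonal left Γ-action, is a free ℤ[Γ]-module. -/
noncomputable section

/-- The `Γ`-action on `C(X; ℤ)` given by `(γ • f) x = f (γ⁻¹ • x)`. -/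
def smulC {Γ X : Type*} [Group Γ] [TopologicalSpace X] [MulAction Γ X]
    (hcont : ∀ γ : Γ, Continuous fun x : X => γ • x) (γ : Γ) (f : C(X, ℤ)) : C(X, ℤ) :=
  f.comp ⟨fun x => γ⁻¹ • x, hcont γ⁻¹⟩

/-- The diagonal `Γ`-action on `C(X;ℤ) ⊗_ℤ ℤ[Γ/H]`, realized as `(Γ ⧸ H) →₀ C(X, ℤ)`
(`ℤ[Γ/H]` is free abelian on the cosets): `γ` acts by left translation on `Γ ⧸ H` and by
`smulC` on the coefficients. -/
def diagAct {Γ X : Type*} [Group Γ] [TopologicalSpace X] [MulAction Γ X] (H : Subgroup Γ)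
    (hcont : ∀ γ : Γ, Continuous fun x : X => γ • x) (γ : Γ)
    (F : (Γ ⧸ H) →₀ C(X, ℤ)) : (Γ ⧸ H) →₀ C(X, ℤ) :=
  Finsupp.equivMapDomain (MulAction.toPerm γ)
    (F.mapRange (smulC hcont γ) (by ext x; rfl))

/-- The left translation `Γ`-action on the free `ℤ[Γ]`-module `⊕_ι ℤ[Γ] = ((ι × Γ) →₀ ℤ)`. -/
def transAct {Γ : Type*} [Group Γ] (ι : Type) (γ : Γ)
    (G : (ι × Γ) →₀ ℤ) : (ι × Γ) →₀ ℤ :=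
  Finsupp.equivMapDomain (Equiv.prodCongr (Equiv.refl ι) (Equiv.mulLeft γ)) G

theorem aux_countable (D : Type*) [TopologicalSpace D] [CompactSpace D]
    [SecondCountableTopology D] [T2Space D] : Countable C(D, ℤ) := by
  obtain ⟨s, hs, hd⟩ := TopologicalSpace.exists_countable_dense C(D, ℤ)
  have : s = Set.univ := by
    ext f
    simp only [Set.mem_univ, iff_true]
    obtain ⟨g, hg, hfg⟩ := Metric.dense_iff.1 hd f 1 one_pos
    have : g = f := by
      ext x
      have h1 := lt_of_le_of_lt (ContinuousMap.dist_apply_le_dist (f := g) (g := f) x)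
        (Metric.mem_ball.1 hg)
      rw [Int.dist_eq] at h1
      have h2 : |g x - f x| < 1 := by exact_mod_cast h1
      rw [Int.abs_lt_one_iff] at h2
      omega
    exact this ▸ hfg
  rw [this] at hs
  exact Set.countable_univ_iff.1 hs

theorem aux_basis (D : Type*) [TopologicalSpace D] [CompactSpace D]
    [SecondCountableTopology D] [T2Space D] [TotallyDisconnectedSpace D] :
    ∃ (ι : Type), Nonempty (C(D, ℤ) ≃+ (ι →₀ ℤ)) := by
  let e1 : LocallyConstant D ℤ ≃+ C(D, ℤ) :=
    { toFun := fun f => f.toContinuousMap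
      invFun := fun f => ⟨f, (IsLocallyConstant.iff_continuous _).2 f.continuous⟩
      left_inv := fun f => rfl
      right_inv := fun f => rfl
      map_add' := fun f g => rfl }
  haveI : Module.Free ℤ (LocallyConstant D ℤ) :=
    LocallyConstant.freeOfProfinite (Profinite.of D)
  let b := Module.Free.chooseBasis ℤ (LocallyConstant D ℤ)
  haveI := aux_countable D
  haveI : Countable (LocallyConstant D ℤ) := e1.toEquiv.countable_iff.2 inferInstance
  haveI : Countable (Module.Free.ChooseBasisIndex ℤ (LocallyConstant D ℤ)) :=
    b.injective.countable
  obtain ⟨f, hf⟩ := exists_injective_nat (Module.Free.ChooseBasisIndex ℤ (LocallyConstant D ℤ))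
  exact ⟨Set.range f, ⟨e1.symm.trans (b.repr.toAddEquiv.trans
    (Finsupp.domCongr (Equiv.ofInjective f hf)))⟩⟩

theorem aux_fund {Γ : Type*} [Group Γ] (H : Subgroup Γ) [Finite H]
    (X : Type*) [TopologicalSpace X] [CompactSpace X]
    [T2Space X] [TotallyDisconnectedSpace X]
    [MulAction Γ X]
    (hcont : ∀ γ : Γ, Continuous fun x : X => γ • x)
    (hfree : ∀ (γ : Γ) (x : X), γ • x = x → γ = 1) :
    ∃ D : Set X, IsClopen D ∧ (∀ h ∈ H, ∀ x ∈ D, h • x ∈ D → h = 1) ∧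
      ∀ x : X, ∃ h ∈ H, h • x ∈ D := by
  suffices h : ∃ D : Set X, IsClopen D ∧ (∀ h ∈ H, ∀ x ∈ D, h • x ∈ D → h = 1) ∧
      ∀ x ∈ (Set.univ : Set X), ∃ h ∈ H, h • x ∈ D by
    simpa using h
  refine isCompact_univ.induction_on (p := fun S => ∃ D : Set X, IsClopen D ∧
      (∀ h ∈ H, ∀ x ∈ D, h • x ∈ D → h = 1) ∧ ∀ x ∈ S, ∃ h ∈ H, h • x ∈ D) ?_ ?_ ?_ ?_
  · exact ⟨∅, isClopen_empty, by simp, by simp⟩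
  · rintro s t hst ⟨D, h1, h2, h3⟩
    exact ⟨D, h1, h2, fun x hx => h3 x (hst hx)⟩
  · rintro s t ⟨D, h1, h2, h3⟩ ⟨E, g1, g2, g3⟩
    let HD : Set X := ⋃ h : H, (fun x : X => (h : Γ) • x) ⁻¹' D
    have hHD : IsClopen HD := isClopen_iUnion_of_finite fun h => h1.preimage (hcont h)
    have hm : ∀ x, x ∈ HD ↔ ∃ h ∈ H, h • x ∈ D := by
      intro x; simp [HD]
    refine ⟨D ∪ (E \ HD), h1.union (g1.diff hHD), ?_, ?_⟩
    · rintro h hh x (hx | ⟨hx, hx'⟩) (hy | ⟨hy, hy'⟩)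
      · exact h2 h hh x hx hy
      · exact absurd ((hm _).2 ⟨h⁻¹, H.inv_mem hh, by simpa using hx⟩) hy'
      · exact absurd ((hm _).2 ⟨h, hh, hy⟩) hx'
      · exact g2 h hh x hx hy
    · intro x hx
      by_cases hxD : x ∈ HD
      · obtain ⟨h, hh, hx⟩ := (hm _).1 hxD
        exact ⟨h, hh, Or.inl hx⟩
      · rcases hx with hx | hx
        · exact absurd ((hm _).2 (h3 x hx)) hxD
        · obtain ⟨h, hh, hx⟩ := g3 x hx
          refine ⟨h, hh, Or.inr ⟨hx, fun hc => hxD ?_⟩⟩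
          obtain ⟨k, hk, hkx⟩ := (hm _).1 hc
          exact (hm _).2 ⟨k * h, H.mul_mem hk hh, by rwa [mul_smul]⟩
  · intro x _
    have : ∀ h : H, ∃ W : Set X, IsClopen W ∧ x ∈ W ∧
        ∀ y ∈ W, (h : Γ) • y ∈ W → (h : Γ) = 1 := by
      intro h
      by_cases h1 : (h : Γ) = 1
      · exact ⟨Set.univ, isClopen_univ, trivial, fun _ _ _ => h1⟩
      · have hne : x ≠ (h : Γ) • x := fun hc => h1 (hfree _ _ hc.symm)
        obtain ⟨V, hV, hxV, hyV⟩ := exists_isClopen_of_totally_separated hne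
        exact ⟨V \ (fun x : X => (h : Γ) • x) ⁻¹' V, hV.diff (hV.preimage (hcont _)),
          ⟨hxV, hyV⟩, fun y hy hy' => absurd hy'.1 hy.2⟩
    choose W hW hxW hWf using this
    have hc : IsClopen (⋂ h, W h) := isClopen_iInter_of_finite hW
    refine ⟨⋂ h, W h, ?_, ⋂ h, W h, hc, ?_, ?_⟩
    · rw [nhdsWithin_univ]
      exact hc.isOpen.mem_nhds (Set.mem_iInter.2 hxW)
    · intro h hh y hy hy'
      exact hWf ⟨h, hh⟩ y (Set.mem_iInter.1 hy _) (Set.mem_iInter.1 hy' _)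
    · intro y hy
      exact ⟨1, H.one_mem, by simpa using hy⟩

/-- `F ↦ (γ ↦ (d ↦ F (γH) (γ d)))`. -/
def auxHom {Γ X : Type*} [Group Γ] [TopologicalSpace X] [MulAction Γ X] (H : Subgroup Γ)
    [Finite H] (hcont : ∀ γ : Γ, Continuous fun x : X => γ • x) (D : Set X) :
    ((Γ ⧸ H) →₀ C(X, ℤ)) →+ (Γ →₀ C(D, ℤ)) where
  toFun F := Finsupp.ofSupportFinite
    (fun γ => (F (γ : Γ ⧸ H)).comp ⟨fun d : D => γ • (d : X),
      (hcont γ).comp continuous_subtype_val⟩) (by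
      have hfin : ((fun γ : Γ => (γ : Γ ⧸ H)) ⁻¹' (F.support : Set (Γ ⧸ H))).Finite := by
        refine Set.Finite.preimage' F.support.finite_toSet ?_
        intro c _
        obtain ⟨g, rfl⟩ := QuotientGroup.mk_surjective c
        refine (Set.finite_range (fun h : H => g * h)).subset ?_
        intro γ hγ
        have : (g : Γ ⧸ H) = γ := (Set.mem_singleton_iff.1 hγ).symm
        rw [QuotientGroup.eq] at this
        exact ⟨⟨_, this⟩, by simp⟩
      refine hfin.subset ?_
      intro γ hγ
      simp only [Set.mem_preimage, Finset.mem_coe, Finsupp.mem_support_iff]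
      intro h0
      apply hγ
      simp only [h0]
      rfl)
  map_zero' := by ext; rfl
  map_add' F G := by ext; rfl

theorem auxHom_apply {Γ X : Type*} [Group Γ] [TopologicalSpace X] [MulAction Γ X]
    (H : Subgroup Γ)
    [Finite H] (hcont : ∀ γ : Γ, Continuous fun x : X => γ • x) (D : Set X)
    (F : (Γ ⧸ H) →₀ C(X, ℤ)) (γ : Γ) (d : D) :
    auxHom H hcont D F γ d = F (γ : Γ ⧸ H) (γ • (d : X)) := rfl

theorem auxHom_bij {Γ X : Type*} [Group Γ] [TopologicalSpace X] [MulAction Γ X]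
    (H : Subgroup Γ)
    [Finite H] (hcont : ∀ γ : Γ, Continuous fun x : X => γ • x) (D : Set X)
    (hD : IsClopen D) (h2 : ∀ h ∈ H, ∀ x ∈ D, h • x ∈ D → h = 1)
    (h3 : ∀ x : X, ∃ h ∈ H, h • x ∈ D) : Function.Bijective (auxHom H hcont D) := by
  classical
  constructor
  · rw [injective_iff_map_eq_zero]
    intro F hF
    ext c x
    obtain ⟨γ, rfl⟩ := QuotientGroup.mk_surjective c
    obtain ⟨h, hh, hx⟩ := h3 (γ⁻¹ • x)
    have := auxHom_apply H hcont D F (γ * h⁻¹) ⟨_, hx⟩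
    rw [hF] at this
    have hq : ((γ * h⁻¹ : Γ) : Γ ⧸ H) = γ := by
      rw [QuotientGroup.eq]; simpa using hh
    rw [hq] at this
    simp only [mul_smul, inv_smul_smul, smul_inv_smul] at this
    exact this.symm
  · intro G
    induction G using Finsupp.induction_linear with
    | zero => exact ⟨0, map_zero _⟩
    | add f g hf hg =>
      obtain ⟨a, rfl⟩ := hf
      obtain ⟨b, rfl⟩ := hg
      exact ⟨a + b, map_add _ _ _⟩
    | single γ g =>
      let g' : C(X, ℤ) := ⟨fun x => if hx : x ∈ D then g ⟨x, hx⟩ else 0, by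
        rw [← continuousOn_univ, ← Set.union_compl_self D]
        refine ContinuousOn.union_of_isOpen ?_ ?_ hD.isOpen hD.compl.isOpen
        · rw [continuousOn_iff_continuous_restrict]
          convert g.continuous using 1
          ext x
          simp
        · refine continuousOn_const (c := (0 : ℤ)) |>.congr ?_
          intro x hx
          exact dif_neg hx⟩
      refine ⟨Finsupp.single (γ : Γ ⧸ H) (smulC hcont γ g'), ?_⟩
      ext γ' d
      rw [auxHom_apply]
      by_cases hγ : γ = γ'
      · subst hγ
        simp [smulC, g']
      · rw [Finsupp.single_eq_of_ne' hγ]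
        by_cases hq : (γ : Γ ⧸ H) = γ'
        · rw [hq, Finsupp.single_eq_same]
          rw [QuotientGroup.eq] at hq
          change (if hx : γ⁻¹ • γ' • (d : X) ∈ D then g ⟨_, hx⟩ else 0) = 0
          rw [dif_neg]
          intro hx
          rw [← mul_smul] at hx
          exact hγ (inv_mul_eq_one.1 (h2 _ hq _ d.2 hx))
        · rw [Finsupp.single_eq_of_ne' hq]
          rfl

/-- Let `H` be a finite subgroup of a group `Γ` acting freely by
homeomorphisms on a Cantor set `X`. Then the `ℤ[Γ]`-module `C(X;ℤ) ⊗_ℤ ℤ[Γ/H]` with the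
diagonal left `Γ`-action is a free `ℤ[Γ]`-module: there is an additive isomorphism onto a
direct sum `⊕_ι ℤ[Γ]` intertwining the diagonal action with the translation action. -/
theorem tensor_with_coset_module_free
    (Γ : Type*) [Group Γ] (H : Subgroup Γ) [Finite H]
    (X : Type*) [TopologicalSpace X] [Nonempty X] [CompactSpace X]
    [TopologicalSpace.MetrizableSpace X] [TotallyDisconnectedSpace X] [PerfectSpace X]
    [MulAction Γ X]
    (hcont : ∀ γ : Γ, Continuous fun x : X => γ • x)
    (hfree : ∀ (γ : Γ) (x : X), γ • x = x → γ = 1) :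
    ∃ (ι : Type) (e : ((Γ ⧸ H) →₀ C(X, ℤ)) ≃+ ((ι × Γ) →₀ ℤ)),
      ∀ (γ : Γ) (F : (Γ ⧸ H) →₀ C(X, ℤ)),
        e (diagAct H hcont γ F) = transAct ι γ (e F) := by
  letI := TopologicalSpace.metrizableSpaceMetric X
  obtain ⟨D, hD, h2, h3⟩ := aux_fund H X hcont hfree
  haveI : CompactSpace D := isCompact_iff_compactSpace.1 hD.isClosed.isCompact
  obtain ⟨ι, ⟨b⟩⟩ := aux_basis D
  let e1 := AddEquiv.ofBijective (auxHom H hcont D) (auxHom_bij H hcont D hD h2 h3)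
  let e2 : (Γ →₀ C(D, ℤ)) ≃+ (Γ →₀ (ι →₀ ℤ)) := Finsupp.mapRange.addEquiv b
  let e3 : (Γ →₀ (ι →₀ ℤ)) ≃+ ((ι × Γ) →₀ ℤ) :=
    Finsupp.curryAddEquiv.symm.trans (Finsupp.domCongr (Equiv.prodComm Γ ι))
  have key : ∀ F i γ, (e1.trans (e2.trans e3)) F (i, γ) = b (auxHom H hcont D F γ) i :=
    fun F i γ => rfl
  refine ⟨ι, e1.trans (e2.trans e3), ?_⟩
  intro γ F
  ext ⟨i, δ⟩
  have hr : transAct ι γ ((e1.trans (e2.trans e3)) F) (i, δ) =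
    (e1.trans (e2.trans e3)) F (i, γ⁻¹ * δ) := rfl
  rw [hr, key, key]
  congr 2
  ext d
  rw [auxHom_apply, auxHom_apply, mul_smul]
  rfl
end
end
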